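/- Let 0 < k < r be integers and W^r_{∞,∞} = {f ∈ L^r_{∞,∞} : M_r(f) ≤ 1}. Then for every δ > 0, ω(D^k, W^r_{∞,∞}; δ) = (‖φ_{r−k}‖ / ‖φ_r‖^{1−k/r}) · δ^{1−k/r}. -/

import Mathlib

open MeasureTheory Filter

noncomputable section

/-- The uniform norm `‖f‖ = sup_{t ∈ ℝ} |f t|` of a function `f : ℝ → ℝ`. -/
def unif (f : ℝ → ℝ) : ℝ := ⨆ t : ℝ, |f t|

/-- `M k f = ‖f⁽ᵏ⁾‖`, the uniform norm of the `k`-th derivative of `f`. -/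
def M (k : ℕ) (f : ℝ → ℝ) : ℝ := unif (iteratedDeriv k f)

/-- The class `L^r_{∞,∞}`: bounded functions `f : ℝ → ℝ` having `r-1` (continuous)
derivatives, with `f⁽ʳ⁻¹⁾` locally absolutely continuous and `f⁽ʳ⁾` essentially bounded;
the last two conditions are equivalent to `f⁽ʳ⁻¹⁾` being Lipschitz. -/
def MemL (r : ℕ) (f : ℝ → ℝ) : Prop :=
  Continuous f ∧ (∃ C : ℝ, ∀ t : ℝ, |f t| ≤ C) ∧ ContDiff ℝ (r - 1 : ℕ) f ∧
    ∃ K : NNReal, LipschitzWith K (iteratedDeriv (r - 1) f)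

/-- The Euler perfect spline `φ_r`: the `r`-th `2π`-periodic antiderivative with zero
mean value of `t ↦ sgn (sin t)`. -/
def eulerPhi : ℕ → ℝ → ℝ
  | 0 => fun t => Real.sign (Real.sin t)
  | (s + 1) => fun t =>
      (∫ x in (0:ℝ)..t, eulerPhi s x) -
        (1 / (2 * Real.pi)) * ∫ x in (0:ℝ)..(2 * Real.pi), ∫ u in (0:ℝ)..x, eulerPhi s u

/-- `φ_{λ,r}(t) = λ^{-r} φ_r (λ t)`. -/
def eulerPhiL (lam : ℝ) (r : ℕ) (t : ℝ) : ℝ := lam ^ (-(r : ℤ)) * eulerPhi r (lam * t)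

/-- The basic step function: `0` on `[0,a]`, `1` on `(a, a+b]`, `0` after `a+b`. -/
def psiBase (a b : ℝ) (t : ℝ) : ℝ := if t ≤ a then 0 else if t ≤ a + b then 1 else 0

/-- `psiBase` continued evenly with respect to the point `a+b+c`. -/
def psiHalf (a b c t : ℝ) : ℝ :=
  if t ≤ a + b + c then psiBase a b t else psiBase a b (2 * (a + b + c) - t)

/-- The Rodov step function `ψ_0(a,b,c)`: equal to `psiBase` on `[0, a+b+c]`, continued
evenly with respect to `a+b+c`, then oddly with respect to `2(a+b+c)`, then
`4(a+b+c)`-periodically. -/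
def psiZero (a b c t : ℝ) : ℝ :=
  if (t - 4 * (a + b + c) * ⌊t / (4 * (a + b + c))⌋) ≤ 2 * (a + b + c) then
    psiHalf a b c (t - 4 * (a + b + c) * ⌊t / (4 * (a + b + c))⌋)
  else
    -psiHalf a b c (4 * (a + b + c) - (t - 4 * (a + b + c) * ⌊t / (4 * (a + b + c))⌋))

/-- `ψ_s(a,b,c)`: the `s`-th periodic antiderivative of `ψ_0(a,b,c)` with zero mean
value over the period `[0, 4(a+b+c)]`. -/
def psi : ℕ → ℝ → ℝ → ℝ → ℝ → ℝ
  | 0 => psiZero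
  | (s + 1) => fun a b c t =>
      (∫ x in (0:ℝ)..t, psi s a b c x) -
        (1 / (4 * (a + b + c))) *
          ∫ x in (0:ℝ)..(4 * (a + b + c)), ∫ u in (0:ℝ)..x, psi s a b c u

/-- The modulus of continuity `ω(D^k, X; δ) = sup {‖f⁽ᵏ⁾‖ : f ∈ X, ‖f‖ ≤ δ}` of the
differentiation operator `D^k` on a class `X`. -/
def omegaMod (k : ℕ) (X : Set (ℝ → ℝ)) (δ : ℝ) : ℝ :=
  sSup {y : ℝ | ∃ f ∈ X, M 0 f ≤ δ ∧ M k f = y}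

end

/-!
Translate the Euler spline `φ_n` to be even with its maximum at `0`. By induction on `n`, a function
`f` with `‖f‖ ≤ ‖φ_n‖` and `‖f⁽ⁿ⁾‖ ≤ 1` that starts above this translate stays above it until the
spline reaches its zero `π/2`: otherwise, at some point `f` is higher than the spline but falls
faster, and by the comparison for `f'` it does so all the way back to the spline's maximum, where
`f` then exceeds `‖φ_n‖`. The same comparison, integrated over a hump of the spline, shows that
`‖f'‖ = ‖φ_{n-1}‖` forces `‖f‖ ≥ ‖φ_n‖`; dilating `f` turns this into `‖f'‖ ≤ ‖φ_{n-1}‖` whenever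
`‖f‖ ≤ ‖φ_n‖`. Iterating gives `‖f⁽ᵏ⁾‖ ≤ ‖φ_{r-k}‖` for all `f` in the class with `‖f‖ ≤ ‖φ_r‖`,
with equality for `f = φ_r`. The dilations `a^r f(·/a)` preserve the class and multiply `‖f‖` by
`a^r` and `‖f⁽ᵏ⁾‖` by `a^{r-k}`, which yields the remaining values of `δ`.
-/

open scoped Real NNReal

/-! ### The uniform norm -/

section Unif

variable {f : ℝ → ℝ}

lemma abs_le_unif (hf : ∃ C, ∀ t, |f t| ≤ C) (t : ℝ) : |f t| ≤ unif f :=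
  le_ciSup (f := fun t ↦ |f t|) (hf.imp fun _ hC ↦ Set.forall_mem_range.2 hC) t

lemma unif_eq_of_abs_le_of_abs_eq {C t₀ : ℝ} (hle : ∀ t, |f t| ≤ C) (heq : |f t₀| = C) :
    unif f = C :=
  le_antisymm (ciSup_le hle) (heq ▸ abs_le_unif ⟨C, hle⟩ t₀)

-- A Lipschitz function is the integral of its derivative, so the exceptional null set is harmless.
lemma lipschitzWith_of_unif_deriv_le {K C : ℝ≥0} (hf : LipschitzWith K f)
    (hC : unif (deriv f) ≤ C) : LipschitzWith C f := by
  have hderiv : ∀ t, |deriv f t| ≤ C := fun t ↦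
    (abs_le_unif (f := deriv f) ⟨K, fun _ ↦ norm_deriv_le_of_lipschitz hf⟩ t).trans hC
  refine .of_dist_le_mul fun x y ↦ ?_
  rw [Real.dist_eq, Real.dist_eq,
    ← (hf.lipschitzOnWith (s := Set.uIcc y x)).absolutelyContinuousOnInterval.integral_deriv_eq_sub]
  exact intervalIntegral.norm_integral_le_of_norm_le_const (f := deriv f) fun u _ ↦ hderiv u

end Unif

/-! ### Functions with Lipschitz iterated derivative -/

/-- The functions whose `n`-th derivative exists and is `K`-Lipschitz; no boundedness is imposed.
For `K = 1`, the bounded ones make up the paper's `W^{n+1}_{∞,∞}`. -/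
structure LipschitzDeriv (K : ℝ≥0) (n : ℕ) (f : ℝ → ℝ) : Prop where
  contDiff : ContDiff ℝ n f
  lipschitzWith : LipschitzWith K (iteratedDeriv n f)

lemma lipschitzDeriv_zero_iff {K : ℝ≥0} {f : ℝ → ℝ} :
    LipschitzDeriv K 0 f ↔ LipschitzWith K f := by
  refine ⟨fun h ↦ by simpa using h.lipschitzWith, fun h ↦ ⟨?_, by simpa using h⟩⟩
  simpa using h.continuous

lemma lipschitzDeriv_succ_iff {K : ℝ≥0} {n : ℕ} {f : ℝ → ℝ} :
    LipschitzDeriv K (n + 1) f ↔ Differentiable ℝ f ∧ LipschitzDeriv K n (deriv f) := by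
  have hcontDiff : ContDiff ℝ (n + 1 : ℕ) f ↔ Differentiable ℝ f ∧ ContDiff ℝ n (deriv f) := by
    rw [Nat.cast_succ, contDiff_succ_iff_deriv]
    simp
  constructor
  · rintro ⟨hf, hlip⟩
    rw [iteratedDeriv_succ'] at hlip
    exact ⟨(hcontDiff.1 hf).1, (hcontDiff.1 hf).2, hlip⟩
  · rintro ⟨hd, hf, hlip⟩
    rw [← iteratedDeriv_succ'] at hlip
    exact ⟨hcontDiff.2 ⟨hd, hf⟩, hlip⟩

lemma hasDerivAt_comp_add_const_sub {f : ℝ → ℝ} (hf : Differentiable ℝ f) (s x : ℝ) :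
    HasDerivAt (fun x ↦ f (x + s) - f x) (deriv f (x + s) - deriv f x) x :=
  ((hf (x + s)).hasDerivAt.comp_add_const x s).fun_sub (hf x).hasDerivAt

namespace LipschitzDeriv

variable {K : ℝ≥0} {n : ℕ} {f : ℝ → ℝ}

lemma differentiable (hf : LipschitzDeriv K (n + 1) f) : Differentiable ℝ f :=
  (lipschitzDeriv_succ_iff.1 hf).1

lemma hasDerivAt (hf : LipschitzDeriv K (n + 1) f) (x : ℝ) : HasDerivAt f (deriv f x) x :=
  (hf.differentiable x).hasDerivAt

lemma deriv (hf : LipschitzDeriv K (n + 1) f) : LipschitzDeriv K n (deriv f) :=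
  (lipschitzDeriv_succ_iff.1 hf).2

lemma neg (hf : LipschitzDeriv K n f) : LipschitzDeriv K n (fun x ↦ -f x) where
  contDiff := hf.contDiff.neg
  lipschitzWith := by
    rw [funext (iteratedDeriv_fun_neg n f)]
    exact hf.lipschitzWith.neg

lemma comp_neg (hf : LipschitzDeriv K n f) : LipschitzDeriv K n (fun x ↦ f (-x)) where
  contDiff := hf.contDiff.comp contDiff_neg
  lipschitzWith := by
    refine .of_dist_le_mul fun x y ↦ ?_
    rw [iteratedDeriv_comp_neg, iteratedDeriv_comp_neg, dist_smul₀, norm_pow, norm_neg, norm_one,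
      one_pow, one_mul, ← dist_neg_neg x y]
    exact hf.lipschitzWith.dist_le_mul _ _

lemma comp_add_const_sub {s : ℝ} (hf : LipschitzDeriv K (n + 1) f) (hs : |s| ≤ 1) :
    LipschitzDeriv K n (fun x ↦ f (x + s) - f x) := by
  have hasDerivAt_diff {m : ℕ} {f : ℝ → ℝ} (hf : LipschitzDeriv K (m + 1) f) :=
    hasDerivAt_comp_add_const_sub hf.differentiable s
  induction n generalizing f with
  | zero =>
    have hlip : LipschitzWith K (_root_.deriv f) := lipschitzDeriv_zero_iff.1 hf.deriv
    refine lipschitzDeriv_zero_iff.2 <| lipschitzWith_of_nnnorm_deriv_le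
      (fun x ↦ (hasDerivAt_diff hf x).differentiableAt) fun x ↦ ?_
    rw [(hasDerivAt_diff hf x).deriv, ← NNReal.coe_le_coe, coe_nnnorm, ← dist_eq_norm]
    calc dist (_root_.deriv f (x + s)) (_root_.deriv f x)
      _ ≤ K * dist (x + s) x := hlip.dist_le_mul _ _
      _ ≤ K := mul_le_of_le_one_right K.coe_nonneg (by simpa using hs)
  | succ n ih =>
    refine lipschitzDeriv_succ_iff.2 ⟨fun x ↦ (hasDerivAt_diff hf x).differentiableAt, ?_⟩
    rw [funext fun x ↦ (hasDerivAt_diff hf x).deriv]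
    exact ih hf.deriv

end LipschitzDeriv

lemma exists_abs_deriv_add_le {f : ℝ → ℝ} {C : ℝ} (hf : Differentiable ℝ f)
    (hC : ∀ x, |f x| ≤ C) (x : ℝ) : ∃ s, |s| ≤ 1 ∧ |deriv f (x + s)| ≤ 2 * C := by
  obtain ⟨c, ⟨hxc, hcx⟩, hslope⟩ := exists_deriv_eq_slope f (lt_add_one x)
    hf.continuous.continuousOn hf.differentiableOn
  refine ⟨c - x, abs_le.2 ⟨by linarith, by linarith⟩, ?_⟩
  rw [add_sub_cancel, hslope, add_sub_cancel_left, div_one]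
  linarith [abs_sub (f (x + 1)) (f x), hC (x + 1), hC x]

-- The bound is uniform in `f`, since the induction replaces `f` by a difference `f (· + s) - f`
-- whose step `s` depends on the point at which the derivative is estimated.
lemma exists_abs_deriv_le (K : ℝ≥0) (n : ℕ) (C : ℝ) :
    ∃ C', ∀ f, LipschitzDeriv K (n + 1) f → (∀ x, |f x| ≤ C) → ∀ x, |deriv f x| ≤ C' := by
  induction n generalizing C with
  | zero =>
    refine ⟨2 * C + K, fun f hf hC x ↦ ?_⟩
    obtain ⟨s, hs, hderiv⟩ := exists_abs_deriv_add_le hf.differentiable hC x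
    have hlip := (lipschitzDeriv_zero_iff.1 hf.deriv).dist_le_mul x (x + s)
    rw [Real.dist_eq, dist_self_add_right, Real.norm_eq_abs] at hlip
    have hK : K * |s| ≤ K := mul_le_of_le_one_right K.coe_nonneg hs
    linarith [abs_sub_abs_le_abs_sub (deriv f x) (deriv f (x + s))]
  | succ n ih =>
    obtain ⟨C', hC'⟩ := ih (2 * C)
    refine ⟨2 * C + C', fun f hf hC x ↦ ?_⟩
    obtain ⟨s, hs, hderiv⟩ := exists_abs_deriv_add_le hf.differentiable hC x
    have hdiff := hC' _ (hf.comp_add_const_sub hs)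
      (fun y ↦ by linarith [abs_sub (f (y + s)) (f y), hC (y + s), hC y]) x
    rw [(hasDerivAt_comp_add_const_sub hf.differentiable s x).deriv, abs_sub_comm] at hdiff
    linarith [abs_sub_abs_le_abs_sub (deriv f x) (deriv f (x + s))]

/-! ### Dilations -/

/-- The dilation `t ↦ a^r f (t / a)`, normalized to preserve the size of the `r`-th derivative.
With `a = λ⁻¹` it takes `φ_r` to the paper's `φ_{λ,r}`. -/
noncomputable def dilate (a : ℝ) (r : ℕ) (f : ℝ → ℝ) (t : ℝ) : ℝ := a ^ r * f (a⁻¹ * t)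

section Dilate

variable {a : ℝ} {f : ℝ → ℝ}

lemma dilate_dilate_inv (ha : a ≠ 0) (r : ℕ) (f : ℝ → ℝ) : dilate a r (dilate a⁻¹ r f) = f := by
  ext t
  simp [dilate, ha]

lemma abs_dilate (ha : 0 < a) (r : ℕ) (f : ℝ → ℝ) (t : ℝ) :
    |dilate a r f t| = a ^ r * |f (a⁻¹ * t)| := by
  rw [dilate, abs_mul, abs_of_pos (by positivity)]

lemma unif_dilate (ha : 0 < a) (r : ℕ) (f : ℝ → ℝ) : unif (dilate a r f) = a ^ r * unif f := by
  have hsurj : Function.Surjective (fun t : ℝ ↦ a⁻¹ * t) :=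
    mul_left_surjective₀ (inv_ne_zero ha.ne')
  simp only [unif, abs_dilate ha, ← Real.mul_iSup_of_nonneg (pow_nonneg ha.le r)]
  rw [hsurj.iSup_comp (g := fun t ↦ |f t|)]

lemma iteratedDeriv_dilate (ha : a ≠ 0) (n : ℕ) {k : ℕ} (hf : ContDiff ℝ k f) :
    iteratedDeriv k (dilate a (n + k) f) = dilate a n (iteratedDeriv k f) := by
  ext t
  unfold dilate
  rw [iteratedDeriv_const_mul_field, iteratedDeriv_comp_const_mul hf, inv_pow]
  field_simp
  ring

lemma M_dilate (ha : 0 < a) (n : ℕ) {k : ℕ} (hf : ContDiff ℝ k f) :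
    M k (dilate a (n + k) f) = a ^ n * M k f := by
  rw [M, iteratedDeriv_dilate ha.ne' n hf, unif_dilate ha, M]

lemma lipschitzWith_dilate_one {K : ℝ≥0} (ha : 0 < a) (hf : LipschitzWith K f) :
    LipschitzWith K (dilate a 1 f) := by
  refine .of_dist_le_mul fun x y ↦ ?_
  calc dist (dilate a 1 f x) (dilate a 1 f y)
    _ = a * dist (f (a⁻¹ * x)) (f (a⁻¹ * y)) := by
      rw [dilate, dilate, pow_one, Real.dist_eq, ← mul_sub, abs_mul, abs_of_pos ha, Real.dist_eq]
    _ ≤ a * (K * dist (a⁻¹ * x) (a⁻¹ * y)) := by gcongr; exact hf.dist_le_mul _ _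
    _ = K * dist x y := by
      rw [Real.dist_eq, ← mul_sub, abs_mul, abs_inv, abs_of_pos ha, Real.dist_eq]
      field_simp

lemma LipschitzDeriv.dilate {K : ℝ≥0} {n : ℕ} (hf : LipschitzDeriv K n f) (ha : 0 < a) :
    LipschitzDeriv K n (dilate a (n + 1) f) where
  contDiff := contDiff_const.mul (hf.contDiff.comp (contDiff_const.mul contDiff_id))
  lipschitzWith := by
    rw [add_comm n, iteratedDeriv_dilate ha.ne' 1 hf.contDiff]
    exact lipschitzWith_dilate_one ha hf.lipschitzWith

end Dilate

/-! ### Euler perfect splines -/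

lemma abs_eulerPhi_zero_le_one (t : ℝ) : |eulerPhi 0 t| ≤ 1 := by
  rcases Real.sign_apply_eq (Real.sin t) with h | h | h <;> simp [eulerPhi, h]

lemma measurable_eulerPhi_zero : Measurable (eulerPhi 0) := by
  have hsign : Measurable Real.sign :=
    .ite measurableSet_Iio measurable_const
      (.ite measurableSet_Ioi measurable_const measurable_const)
  exact hsign.comp Real.measurable_sin

lemma continuous_eulerPhi_succ_of_intervalIntegrable {n : ℕ}
    (hn : ∀ a b, IntervalIntegrable (eulerPhi n) volume a b) : Continuous (eulerPhi (n + 1)) :=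
  (intervalIntegral.continuous_primitive hn 0).sub continuous_const

lemma intervalIntegrable_eulerPhi (n : ℕ) (a b : ℝ) :
    IntervalIntegrable (eulerPhi n) volume a b := by
  induction n generalizing a b with
  | zero =>
    exact (intervalIntegrable_const (c := (1 : ℝ))).mono_fun
      measurable_eulerPhi_zero.aestronglyMeasurable
      (.of_forall fun t ↦ by simpa using abs_eulerPhi_zero_le_one t)
  | succ n ih => exact (continuous_eulerPhi_succ_of_intervalIntegrable ih).intervalIntegrable a b

lemma continuous_eulerPhi_succ (n : ℕ) : Continuous (eulerPhi (n + 1)) :=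
  continuous_eulerPhi_succ_of_intervalIntegrable (intervalIntegrable_eulerPhi n)

lemma eulerPhi_succ_sub (n : ℕ) (a b : ℝ) :
    eulerPhi (n + 1) b - eulerPhi (n + 1) a = ∫ x in a..b, eulerPhi n x := by
  rw [eulerPhi, sub_sub_sub_cancel_right, intervalIntegral.integral_interval_sub_left]
  all_goals exact intervalIntegrable_eulerPhi n _ _

lemma integral_eulerPhi_succ (n : ℕ) : ∫ x in (0 : ℝ)..2 * π, eulerPhi (n + 1) x = 0 := by
  have hprimitive : Continuous fun x ↦ ∫ u in (0 : ℝ)..x, eulerPhi n u :=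
    intervalIntegral.continuous_primitive (intervalIntegrable_eulerPhi n) 0
  simp only [eulerPhi]
  rw [intervalIntegral.integral_sub (hprimitive.intervalIntegrable _ _) intervalIntegrable_const,
    intervalIntegral.integral_const]
  simp [field]

-- `φ_{n+1}(t + π) + φ_{n+1}(t)` is constant as `φ_n` is antiperiodic; `φ_{n+1}` having mean zero,
-- the constant vanishes.
lemma antiperiodic_eulerPhi (n : ℕ) : Function.Antiperiodic (eulerPhi n) π := by
  induction n with
  | zero =>
    intro t
    simp only [eulerPhi, Real.sin_add_pi, Real.sign_neg]
  | succ n ih =>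
    intro t
    have hconst : ∀ x, eulerPhi (n + 1) x + eulerPhi (n + 1) (x + π) =
        eulerPhi (n + 1) t + eulerPhi (n + 1) (t + π) := by
      intro x
      have hshift : ∫ y in t + π..x + π, eulerPhi n y = -∫ y in t..x, eulerPhi n y := by
        rw [← intervalIntegral.integral_comp_add_right, ← intervalIntegral.integral_neg]
        simp only [ih _]
      linarith [eulerPhi_succ_sub n t x, eulerPhi_succ_sub n (t + π) (x + π)]
    have hint := fun a b ↦ intervalIntegrable_eulerPhi (n + 1) a b
    have hmean : π * (eulerPhi (n + 1) t + eulerPhi (n + 1) (t + π)) = 0 := calc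
      _ = ∫ x in (0 : ℝ)..π, (eulerPhi (n + 1) x + eulerPhi (n + 1) (x + π)) := by
        simp only [hconst, intervalIntegral.integral_const, sub_zero, smul_eq_mul]
      _ = (∫ x in (0 : ℝ)..π, eulerPhi (n + 1) x) + ∫ x in π..2 * π, eulerPhi (n + 1) x := by
        rw [intervalIntegral.integral_add (hint _ _) (((continuous_eulerPhi_succ n).comp'
          (continuous_add_const π)).intervalIntegrable _ _),
          intervalIntegral.integral_comp_add_right, zero_add, two_mul]
      _ = 0 := by
        rw [intervalIntegral.integral_add_adjacent_intervals (hint _ _) (hint _ _),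
          integral_eulerPhi_succ]
    linarith [(mul_eq_zero.1 hmean).resolve_left Real.pi_ne_zero]

lemma hasDerivAt_eulerPhi (n : ℕ) (t : ℝ) :
    HasDerivAt (eulerPhi (n + 2)) (eulerPhi (n + 1) t) t :=
  ((continuous_eulerPhi_succ n).integral_hasStrictDerivAt 0 t).hasDerivAt.sub_const _

lemma iteratedDeriv_eulerPhi (k n : ℕ) :
    iteratedDeriv k (eulerPhi (n + k + 1)) = eulerPhi (n + 1) := by
  induction k with
  | zero => simp
  | succ k ih =>
    rw [iteratedDeriv_succ', ← add_assoc, funext fun t ↦ (hasDerivAt_eulerPhi (n + k) t).deriv, ih]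

lemma lipschitzDeriv_eulerPhi (n : ℕ) : LipschitzDeriv 1 n (eulerPhi (n + 1)) := by
  induction n with
  | zero =>
    refine lipschitzDeriv_zero_iff.2 <| .of_dist_le_mul fun x y ↦ ?_
    rw [Real.dist_eq, eulerPhi_succ_sub, Real.dist_eq, NNReal.coe_one]
    exact intervalIntegral.norm_integral_le_of_norm_le_const (f := eulerPhi 0)
      fun u _ ↦ abs_eulerPhi_zero_le_one u
  | succ n ih =>
    refine lipschitzDeriv_succ_iff.2 ⟨fun t ↦ (hasDerivAt_eulerPhi n t).differentiableAt, ?_⟩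
    rwa [funext fun t ↦ (hasDerivAt_eulerPhi n t).deriv]

lemma apply_half_add_eq_neg_of_even_of_antiperiodic {f : ℝ → ℝ} {c : ℝ} (heven : Function.Even f)
    (hanti : Function.Antiperiodic f c) (t : ℝ) : f (c / 2 + t) = -f (c / 2 - t) := by
  rw [← heven (c / 2 - t), ← hanti]
  congr 1
  ring

/-- The Euler spline `φ_n` in cosine phase: its translate by `(n + 1)π/2`, which is even and, for
`n ≥ 1`, decreases on `[0, π]` from its maximum `‖φ_n‖`. -/
noncomputable def eulerCos (n : ℕ) (t : ℝ) : ℝ := eulerPhi n (t + (n + 1) * (π / 2))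

lemma antiperiodic_eulerCos (n : ℕ) : Function.Antiperiodic (eulerCos n) π :=
  (antiperiodic_eulerPhi n).add_const _

lemma continuous_eulerCos_succ (n : ℕ) : Continuous (eulerCos (n + 1)) :=
  (continuous_eulerPhi_succ n).comp (continuous_add_const _)

lemma eulerCos_add_pi_div_two (n : ℕ) (t : ℝ) :
    eulerCos n (t + π / 2) = eulerPhi n (t + (n + 2) * (π / 2)) := by
  rw [eulerCos]
  ring_nf

lemma eulerCos_succ_sub (n : ℕ) (a b : ℝ) :
    eulerCos (n + 1) b - eulerCos (n + 1) a = ∫ x in a..b, eulerCos n (x + π / 2) := by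
  simp only [eulerCos_add_pi_div_two, intervalIntegral.integral_comp_add_right]
  rw [← eulerPhi_succ_sub, eulerCos, eulerCos]
  push_cast
  ring_nf

lemma even_eulerCos (n : ℕ) : Function.Even (eulerCos n) := by
  induction n with
  | zero =>
    intro t
    simp [eulerCos, eulerPhi, Real.sin_add_pi_div_two]
  | succ n ih =>
    intro t
    have hodd : ∀ x, eulerCos n (-x + π / 2) = -eulerCos n (x + π / 2) := fun x ↦ by
      rw [neg_add_eq_sub, add_comm x,
        apply_half_add_eq_neg_of_even_of_antiperiodic ih (antiperiodic_eulerCos n), neg_neg]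
    have hzero : ∫ x in -t..t, eulerCos n (x + π / 2) = 0 := by
      have hreflect :=
        intervalIntegral.integral_comp_neg (a := -t) (b := t) fun x ↦ eulerCos n (x + π / 2)
      simp only [hodd, intervalIntegral.integral_neg, neg_neg] at hreflect
      linarith
    linarith [eulerCos_succ_sub n (-t) t]

lemma eulerCos_pi_div_two_add (n : ℕ) (t : ℝ) :
    eulerCos n (π / 2 + t) = -eulerCos n (π / 2 - t) :=
  apply_half_add_eq_neg_of_even_of_antiperiodic (even_eulerCos n) (antiperiodic_eulerCos n) t

lemma eulerCos_pi_div_two (n : ℕ) : eulerCos n (π / 2) = 0 := by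
  have h := eulerCos_pi_div_two_add n 0
  rw [add_zero, sub_zero] at h
  linarith

lemma hasDerivAt_eulerCos (n : ℕ) (t : ℝ) :
    HasDerivAt (eulerCos (n + 2)) (-eulerCos (n + 1) (π / 2 - t)) t := by
  have hphase : t + ((n + 1 : ℕ) + 2) * (π / 2) = t + ((n + 2 : ℕ) + 1) * (π / 2) := by
    push_cast
    ring
  rw [← eulerCos_pi_div_two_add, add_comm (π / 2), eulerCos_add_pi_div_two, hphase]
  exact (hasDerivAt_eulerPhi n _).comp_add_const t _

lemma eulerCos_one {t : ℝ} (ht : t ∈ Set.Icc 0 π) : eulerCos 1 t = π / 2 - t := by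
  have hsign : ∀ x ∈ Set.Ioo 0 π, eulerCos 0 (x + π / 2) = -1 := fun x hx ↦ by
    have hcos : x + π / 2 + ((0 : ℕ) + 1) * (π / 2) = x + π := by push_cast; ring
    simp only [eulerCos, eulerPhi, hcos, Real.sin_add_pi, Real.sign_neg,
      Real.sign_of_pos (Real.sin_pos_of_mem_Ioo hx)]
  have hint : ∫ x in t..π / 2, eulerCos 0 (x + π / 2) = ∫ _ in t..π / 2, (-1 : ℝ) := by
    refine intervalIntegral.integral_congr_uIoo fun x hx ↦ hsign x ⟨?_, ?_⟩
    · exact (le_min ht.1 (by positivity)).trans_lt hx.1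
    · exact hx.2.trans_le (max_le ht.2 (by linarith [Real.pi_pos]))
  have hsub := eulerCos_succ_sub 0 t (π / 2)
  rw [eulerCos_pi_div_two, hint, intervalIntegral.integral_const, smul_eq_mul] at hsub
  linarith

lemma strictAntiOn_eulerCos_succ (n : ℕ) : StrictAntiOn (eulerCos (n + 1)) (Set.Icc 0 π) := by
  induction n with
  | zero =>
    intro x hx y hy hxy
    rw [eulerCos_one hx, eulerCos_one hy]
    linarith
  | succ n ih =>
    refine strictAntiOn_of_deriv_neg (convex_Icc _ _) (continuous_eulerCos_succ _).continuousOn ?_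
    rw [interior_Icc]
    rintro x ⟨hx0, hxπ⟩
    have hpos : ∀ s, 0 ≤ s → s < π / 2 → 0 < eulerCos (n + 1) s := fun s hs0 hs ↦ by
      rw [← eulerCos_pi_div_two (n + 1)]
      exact ih ⟨hs0, by linarith⟩ ⟨by linarith, by linarith⟩ hs
    rw [(hasDerivAt_eulerCos n x).deriv, neg_lt_zero]
    rcases le_total x (π / 2) with hx | hx
    · exact hpos _ (by linarith) (by linarith)
    · rw [← even_eulerCos]
      exact hpos _ (by linarith) (by linarith)

lemma eulerCos_succ_zero_pos (n : ℕ) : 0 < eulerCos (n + 1) 0 := by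
  have hπ := Real.pi_pos
  have hlt := strictAntiOn_eulerCos_succ n (a := 0) (b := π / 2) ⟨le_rfl, hπ.le⟩
    ⟨by linarith, by linarith⟩ (by linarith)
  rwa [eulerCos_pi_div_two] at hlt

lemma abs_eulerCos_succ_le (n : ℕ) (t : ℝ) : |eulerCos (n + 1) t| ≤ eulerCos (n + 1) 0 := by
  have hperiodic : Function.Periodic (fun t ↦ |eulerCos (n + 1) t|) π := fun t ↦ by
    simp only [antiperiodic_eulerCos (n + 1) t, abs_neg]
  obtain ⟨s, hs, hts⟩ := hperiodic.exists_mem_Ico₀ Real.pi_pos t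
  have hanti := (strictAntiOn_eulerCos_succ n).antitoneOn
  have hs' : s ∈ Set.Icc 0 π := Set.Ico_subset_Icc_self hs
  rw [hts, abs_le, ← (antiperiodic_eulerCos (n + 1)).eq]
  exact ⟨hanti hs' (Set.right_mem_Icc.2 Real.pi_pos.le) hs'.2,
    hanti (Set.left_mem_Icc.2 Real.pi_pos.le) hs' hs'.1⟩

lemma abs_eulerPhi_succ_le (n : ℕ) (t : ℝ) : |eulerPhi (n + 1) t| ≤ eulerCos (n + 1) 0 := by
  simpa [eulerCos] using abs_eulerCos_succ_le n (t - ((n + 1 : ℕ) + 1) * (π / 2))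

lemma unif_eulerPhi_succ (n : ℕ) : unif (eulerPhi (n + 1)) = eulerCos (n + 1) 0 :=
  unif_eq_of_abs_le_of_abs_eq (abs_eulerPhi_succ_le n) (abs_of_pos (eulerCos_succ_zero_pos n))

lemma unif_eulerPhi_pos {r : ℕ} (hr : r ≠ 0) : 0 < unif (eulerPhi r) := by
  obtain ⟨n, rfl⟩ := Nat.exists_eq_succ_of_ne_zero hr
  rw [unif_eulerPhi_succ]
  exact eulerCos_succ_zero_pos n

/-! ### Comparison with Euler splines -/

lemma le_of_hasDerivAt_of_nonneg {G G' : ℝ → ℝ} {a b : ℝ} (hab : a ≤ b)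
    (hG : ∀ x, HasDerivAt G (G' x) x) (hG' : ∀ x ∈ Set.Ioo a b, 0 ≤ G' x) : G a ≤ G b := by
  refine monotoneOn_of_hasDerivWithinAt_nonneg (f := G) (f' := G') (convex_Icc a b)
    (fun x _ ↦ (hG x).continuousAt.continuousWithinAt) (fun x _ ↦ (hG x).hasDerivWithinAt) ?_
    (Set.left_mem_Icc.2 hab) (Set.right_mem_Icc.2 hab) hab
  rwa [interior_Icc]

lemma exists_pos_and_deriv_neg {G G' : ℝ → ℝ} {a b : ℝ} (hab : a ≤ b)
    (hG : ∀ x, HasDerivAt G (G' x) x) (ha : 0 < G a) (hb : G b ≤ 0) :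
    ∃ c ∈ Set.Ioo a b, 0 < G c ∧ G' c < 0 := by
  have hcont : Continuous G := continuous_iff_continuousAt.2 fun x ↦ (hG x).continuousAt
  obtain ⟨s, ⟨⟨has, hsb⟩, hs⟩, hleast⟩ :=
    (isCompact_Icc.inter_right (isClosed_Iic.preimage hcont)).exists_isLeast
      ⟨b, Set.right_mem_Icc.2 hab, hb⟩
  replace hs : G s ≤ 0 := hs
  have has' : a < s := has.lt_of_ne (by rintro rfl; linarith)
  obtain ⟨c, ⟨hac, hcs⟩, hslope⟩ :=
    exists_hasDerivAt_eq_slope G G' has' hcont.continuousOn fun x _ ↦ hG x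
  refine ⟨c, ⟨hac, hcs.trans_le hsb⟩, ?_, ?_⟩
  · by_contra! hc
    exact hcs.not_ge (hleast ⟨⟨hac.le, hcs.le.trans hsb⟩, hc⟩)
  · rw [hslope]
    exact div_neg_of_neg_of_pos (by linarith) (by linarith)

lemma exists_pos_pow_mul_eq {A B : ℝ} {n : ℕ} (hA : 0 < A) (hB : 0 < B) (hn : n ≠ 0) :
    ∃ a : ℝ, 0 < a ∧ a ^ n * A = B :=
  ⟨(B / A) ^ (n⁻¹ : ℝ), by positivity, by
    rw [Real.rpow_inv_natCast_pow (by positivity) hn, div_mul_cancel₀ _ hA.ne']⟩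

/-- Kolmogorov's comparison property of order `n + 1`: if `f` is bounded by `‖φ_{n+1}‖` and its
`n`-th derivative is `1`-Lipschitz, then moving right from a point where `f` exceeds the Euler
spline, `f` cannot drop below the spline before the latter reaches its zero `π/2`. -/
def EulerComparison (n : ℕ) : Prop :=
  ∀ f, LipschitzDeriv 1 n f → (∀ x, |f x| ≤ eulerCos (n + 1) 0) →
    ∀ ξ η t, 0 ≤ η → 0 ≤ t → η + t ≤ π / 2 →
      eulerCos (n + 1) η < f ξ → eulerCos (n + 1) (η + t) ≤ f (ξ + t)

lemma eulerComparison_zero : EulerComparison 0 := by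
  intro f hf _ ξ η t hη ht hηt hlt
  have hπ := Real.pi_pos
  have hlip := (lipschitzDeriv_zero_iff.1 hf).dist_le_mul ξ (ξ + t)
  rw [Real.dist_eq, dist_self_add_right, Real.norm_of_nonneg ht, NNReal.coe_one, one_mul] at hlip
  rw [eulerCos_one ⟨hη, by linarith⟩] at hlt
  rw [eulerCos_one ⟨by linarith, by linarith⟩]
  linarith [le_of_abs_le hlip]

namespace EulerComparison

variable {n : ℕ} {f : ℝ → ℝ}

lemma left (h : EulerComparison n) (hf : LipschitzDeriv 1 n f)
    (hbound : ∀ x, |f x| ≤ eulerCos (n + 1) 0) {ξ η t : ℝ} (hη : 0 ≤ η) (ht : 0 ≤ t)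
    (hηt : η + t ≤ π / 2) (hlt : eulerCos (n + 1) η < f ξ) :
    eulerCos (n + 1) (η + t) ≤ f (ξ - t) := by
  have hreflect := h _ hf.comp_neg (fun x ↦ hbound (-x)) (-ξ) η t hη ht hηt (by rwa [neg_neg])
  rwa [neg_add, neg_neg, ← sub_eq_add_neg] at hreflect

-- The derivative stays above the spline on both sides of `ξ`; integrate over the hump.
lemma eulerCos_sub_le (h : EulerComparison n) {C ξ η : ℝ} (hf : LipschitzDeriv 1 (n + 1) f)
    (hC : ∀ x, |f x| ≤ C) (hderiv : ∀ x, |deriv f x| ≤ eulerCos (n + 1) 0)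
    (hη : 0 ≤ η) (hη' : η ≤ π / 2) (hlt : eulerCos (n + 1) η < deriv f ξ) :
    eulerCos (n + 2) 0 - eulerCos (n + 2) (π / 2 - η) ≤ C := by
  have hmono := le_of_hasDerivAt_of_nonneg (a := 0) (b := π / 2 - η)
    (G := fun t ↦ f (ξ + t) - f (ξ - t) - 2 * eulerCos (n + 2) (π / 2 - η - t)) (by linarith)
    (fun t ↦ (((hf.hasDerivAt (ξ + t)).comp_const_add ξ t).fun_sub
      ((hf.hasDerivAt (ξ - t)).comp_const_sub ξ t)).fun_sub
      (((hasDerivAt_eulerCos n (π / 2 - η - t)).comp_const_sub (π / 2 - η) t).const_mul 2))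
    fun t ht ↦ by
      have hright := h _ hf.deriv hderiv ξ η t hη ht.1.le (by linarith [ht.2]) hlt
      have hleft := h.left hf.deriv hderiv hη ht.1.le (by linarith [ht.2]) hlt
      rw [sub_sub (π / 2), sub_sub_cancel]
      linarith
  simp only [add_zero, sub_zero, sub_self] at hmono
  linarith [le_of_abs_le (hC (ξ + (π / 2 - η))), neg_le_of_abs_le (hC (ξ - (π / 2 - η)))]

lemma eulerCos_zero_le_of_unif_deriv_eq (h : EulerComparison n) {C : ℝ}
    (hf : LipschitzDeriv 1 (n + 1) f) (hC : ∀ x, |f x| ≤ C)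
    (hderiv : unif (deriv f) = eulerCos (n + 1) 0) : eulerCos (n + 2) 0 ≤ C := by
  obtain ⟨C', hC'⟩ := exists_abs_deriv_le 1 n C
  have hle : ∀ x, |deriv f x| ≤ eulerCos (n + 1) 0 := fun x ↦
    hderiv ▸ abs_le_unif ⟨C', hC' f hf hC⟩ x
  have hsub : ∀ η ∈ Set.Ioo 0 (π / 2), eulerCos (n + 2) 0 - eulerCos (n + 2) (π / 2 - η) ≤ C := by
    rintro η ⟨hη, hη'⟩
    have hlt : eulerCos (n + 1) η < unif (deriv f) := hderiv ▸ strictAntiOn_eulerCos_succ n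
      (Set.left_mem_Icc.2 Real.pi_pos.le) ⟨hη.le, by linarith⟩ hη
    obtain ⟨ξ, hξ⟩ := exists_lt_of_lt_ciSup hlt
    rcases lt_abs.1 hξ with hξ | hξ
    · exact h.eulerCos_sub_le hf hC hle hη.le hη'.le hξ
    · rw [← deriv.fun_neg] at hξ
      exact h.eulerCos_sub_le hf.neg (by simpa only [abs_neg])
        (by simpa only [deriv.fun_neg, abs_neg]) hη.le hη'.le hξ
  have hcont : Continuous fun η ↦ eulerCos (n + 2) 0 - eulerCos (n + 2) (π / 2 - η) :=
    continuous_const.sub ((continuous_eulerCos_succ _).comp (continuous_sub_left _))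
  have hlim := le_of_tendsto (hcont.tendsto 0 |>.mono_left nhdsWithin_le_nhds)
    (eventually_of_mem (Ioo_mem_nhdsGT (by positivity : (0 : ℝ) < π / 2)) hsub)
  rwa [sub_zero, eulerCos_pi_div_two, sub_zero] at hlim

-- If `‖f'‖` were larger than claimed, a dilation by `a < 1` would bring it down to the extremal
-- value while making `f` too small.
lemma abs_deriv_le (h : EulerComparison n) (hf : LipschitzDeriv 1 (n + 1) f)
    (hbound : ∀ x, |f x| ≤ eulerCos (n + 2) 0) (x : ℝ) :
    |deriv f x| ≤ eulerCos (n + 1) 0 := by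
  obtain ⟨C', hC'⟩ := exists_abs_deriv_le 1 n (eulerCos (n + 2) 0)
  refine (abs_le_unif ⟨C', hC' f hf hbound⟩ x).trans ?_
  by_contra! hlt
  have hpos := (eulerCos_succ_zero_pos n).trans hlt
  obtain ⟨a, ha, heq⟩ := exists_pos_pow_mul_eq hpos (eulerCos_succ_zero_pos n) n.succ_ne_zero
  have hderiv : deriv (dilate a (n + 2) f) = dilate a (n + 1) (deriv f) := by
    simpa only [iteratedDeriv_one] using
      iteratedDeriv_dilate (k := 1) ha.ne' (n + 1) (hf.contDiff.of_le (by simp))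
  have hle : eulerCos (n + 2) 0 ≤ a ^ (n + 2) * eulerCos (n + 2) 0 :=
    h.eulerCos_zero_le_of_unif_deriv_eq (hf.dilate ha)
      (fun t ↦ (abs_dilate ha _ f t).trans_le (by gcongr; exact hbound _))
      (by rw [hderiv, unif_dilate ha, heq])
  have ha1 : 1 ≤ a := by
    rw [← one_le_pow_iff_of_nonneg ha.le (n + 1).succ_ne_zero]
    exact (le_mul_iff_one_le_left (eulerCos_succ_zero_pos _)).1 hle
  exact hlt.not_ge (heq ▸ le_mul_of_one_le_left hpos.le (one_le_pow₀ ha1))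

-- A slope at `p` steeper than the spline's at `q` persists to the left, so `f p > eulerCos (n+2) q`
-- would push `f (p - q)` above the maximum of the spline.
lemma le_eulerCos_of_deriv_lt (h : EulerComparison n) (hf : LipschitzDeriv 1 (n + 1) f)
    (hbound : ∀ x, |f x| ≤ eulerCos (n + 2) 0) {p q : ℝ} (hq : 0 ≤ q) (hq' : q ≤ π / 2)
    (hlt : deriv f p < -eulerCos (n + 1) (π / 2 - q)) : f p ≤ eulerCos (n + 2) q := by
  have hderiv : ∀ x, |-deriv f x| ≤ eulerCos (n + 1) 0 := fun x ↦ by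
    rw [abs_neg]
    exact h.abs_deriv_le hf hbound x
  have hmono := le_of_hasDerivAt_of_nonneg
    (G := fun t ↦ f (p - t) - eulerCos (n + 2) (q - t)) hq
    (fun t ↦ ((hf.hasDerivAt (p - t)).comp_const_sub p t).fun_sub
      ((hasDerivAt_eulerCos n (q - t)).comp_const_sub q t))
    fun t ht ↦ by
      have hleft := h.left hf.deriv.neg hderiv (ξ := p) (η := π / 2 - q) (t := t)
        (by linarith) ht.1.le (by linarith [ht.2]) (by linarith)
      rw [← sub_add (π / 2)]
      linarith
  simp only [sub_zero, sub_self] at hmono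
  linarith [le_of_abs_le (hbound (p - q))]

lemma succ (h : EulerComparison n) : EulerComparison (n + 1) := by
  intro f hf hbound ξ η t hη ht hηt hlt
  by_contra! hdrop
  obtain ⟨c, ⟨hc0, hct⟩, hpos, hneg⟩ := exists_pos_and_deriv_neg
    (G := fun x ↦ f (ξ + x) - eulerCos (n + 2) (η + x)) ht
    (fun x ↦ ((hf.hasDerivAt (ξ + x)).comp_const_add ξ x).fun_sub
      ((hasDerivAt_eulerCos n (η + x)).comp_const_add η x))
    (by simpa using hlt) (by linarith)
  have hle := h.le_eulerCos_of_deriv_lt hf hbound (p := ξ + c) (q := η + c)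
    (by linarith) (by linarith) (by linarith)
  linarith

end EulerComparison

lemma eulerComparison (n : ℕ) : EulerComparison n := by
  induction n with
  | zero => exact eulerComparison_zero
  | succ n ih => exact ih.succ

lemma abs_iteratedDeriv_le_eulerCos {k n : ℕ} {f : ℝ → ℝ} (hf : LipschitzDeriv 1 (n + k) f)
    (hbound : ∀ x, |f x| ≤ eulerCos (n + k + 1) 0) (x : ℝ) :
    |iteratedDeriv k f x| ≤ eulerCos (n + 1) 0 := by
  induction k generalizing f with
  | zero => simpa using hbound x
  | succ k ih =>
    rw [iteratedDeriv_succ']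
    exact ih hf.deriv ((eulerComparison (n + k)).abs_deriv_le hf hbound)

/-! ### The modulus of continuity of `D^k` -/

/-- The paper's class `W^r_{∞,∞} = {f ∈ L^r_{∞,∞} : M_r(f) ≤ 1}`. -/
def sobolevClass (r : ℕ) : Set (ℝ → ℝ) := {f | MemL r f ∧ M r f ≤ 1}

lemma M_zero (f : ℝ → ℝ) : M 0 f = unif f := by
  rw [M, iteratedDeriv_zero]

lemma mem_sobolevClass_succ_iff {n : ℕ} {f : ℝ → ℝ} :
    f ∈ sobolevClass (n + 1) ↔ (∃ C, ∀ t, |f t| ≤ C) ∧ LipschitzDeriv 1 n f := by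
  rw [sobolevClass, Set.mem_ofPred_eq, MemL, M, iteratedDeriv_succ, Nat.add_sub_cancel]
  constructor
  · rintro ⟨⟨-, hbdd, hcontDiff, K, hlip⟩, hunif⟩
    exact ⟨hbdd, hcontDiff, lipschitzWith_of_unif_deriv_le hlip hunif⟩
  · rintro ⟨hbdd, hcontDiff, hlip⟩
    exact ⟨⟨hcontDiff.continuous, hbdd, hcontDiff, 1, hlip⟩,
      ciSup_le fun _ ↦ norm_deriv_le_of_lipschitz hlip⟩

lemma dilate_mem_sobolevClass_succ {n : ℕ} {f : ℝ → ℝ} {a : ℝ} (ha : 0 < a)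
    (hf : f ∈ sobolevClass (n + 1)) : dilate a (n + 1) f ∈ sobolevClass (n + 1) := by
  rw [mem_sobolevClass_succ_iff] at hf ⊢
  obtain ⟨⟨C, hC⟩, hlip⟩ := hf
  exact ⟨⟨a ^ (n + 1) * C, fun t ↦ (abs_dilate ha _ f t).trans_le (by gcongr; exact hC _)⟩,
    hlip.dilate ha⟩

lemma omegaMod_sobolevClass_pow_mul {k r : ℕ} (hkr : k < r) {a : ℝ} (ha : 0 < a) (δ : ℝ) :
    omegaMod k (sobolevClass r) (a ^ r * δ) = a ^ (r - k) * omegaMod k (sobolevClass r) δ := by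
  obtain ⟨n, rfl⟩ : ∃ n, r = n + k + 1 := ⟨r - k - 1, by omega⟩
  have hM : ∀ {b : ℝ} {f}, 0 < b → f ∈ sobolevClass (n + k + 1) →
      M k (dilate b (n + k + 1) f) = b ^ (n + 1) * M k f := fun hb hf ↦ by
    rw [add_right_comm]
    exact M_dilate hb (n + 1) <|
      (mem_sobolevClass_succ_iff.1 hf).2.contDiff.of_le (by norm_cast; omega)
  rw [show n + k + 1 - k = n + 1 by omega, omegaMod, omegaMod, ← smul_eq_mul (a ^ (n + 1)),
    ← Real.sSup_smul_of_nonneg (by positivity)]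
  congr 1
  ext y
  rw [Set.mem_smul_set]
  constructor
  · rintro ⟨f, hf, hδ, rfl⟩
    have hfg := dilate_dilate_inv ha.ne' (n + k + 1) f
    have hg := dilate_mem_sobolevClass_succ (inv_pos.2 ha) hf
    refine ⟨_, ⟨dilate a⁻¹ (n + k + 1) f, hg, ?_, rfl⟩, by rw [smul_eq_mul, ← hM ha hg, hfg]⟩
    rw [M_zero, ← hfg, unif_dilate ha] at hδ
    rw [M_zero]
    exact le_of_mul_le_mul_left hδ (by positivity)
  · rintro ⟨_, ⟨f, hf, hδ, rfl⟩, rfl⟩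
    refine ⟨_, dilate_mem_sobolevClass_succ ha hf, ?_, hM ha hf⟩
    rw [M_zero] at hδ ⊢
    rw [unif_dilate ha]
    gcongr

lemma omegaMod_sobolevClass_unif_eulerPhi {k r : ℕ} (hkr : k < r) :
    omegaMod k (sobolevClass r) (unif (eulerPhi r)) = unif (eulerPhi (r - k)) := by
  obtain ⟨n, rfl⟩ : ∃ n, r = n + k + 1 := ⟨r - k - 1, by omega⟩
  rw [show n + k + 1 - k = n + 1 by omega]
  refine IsGreatest.csSup_eq ⟨⟨eulerPhi (n + k + 1), ?_, (M_zero _).le, ?_⟩, ?_⟩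
  · exact mem_sobolevClass_succ_iff.2
      ⟨⟨_, abs_eulerPhi_succ_le (n + k)⟩, lipschitzDeriv_eulerPhi (n + k)⟩
  · rw [M, iteratedDeriv_eulerPhi]
  · rintro _ ⟨f, hf, hδ, rfl⟩
    obtain ⟨hbdd, hlip⟩ := mem_sobolevClass_succ_iff.1 hf
    rw [M_zero, unif_eulerPhi_succ] at hδ
    rw [unif_eulerPhi_succ]
    exact ciSup_le (abs_iteratedDeriv_le_eulerCos hlip fun x ↦ (abs_le_unif hbdd x).trans hδ)

lemma pow_rpow_one_sub_div {a : ℝ} {k r : ℕ} (ha : 0 ≤ a) (hkr : k ≤ r) (hr : r ≠ 0) :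
    (a ^ r) ^ (1 - (k : ℝ) / r) = a ^ (r - k) := by
  rw [← Real.rpow_natCast, ← Real.rpow_mul ha, mul_one_sub, mul_div_cancel₀ _ (by positivity),
    ← Nat.cast_sub hkr, Real.rpow_natCast]

/-- The modulus of continuity of `D^k` on `W^r_{∞,∞} = {f ∈ L^r_{∞,∞} : M_r(f) ≤ 1}`:
`ω(D^k, W^r_{∞,∞}; δ) = (‖φ_{r-k}‖ / ‖φ_r‖^{1-k/r}) δ^{1-k/r}` for every `δ > 0`. -/
theorem stmt5 (k r : ℕ) (hk : 0 < k) (hkr : k < r) (δ : ℝ) (hδ : 0 < δ) :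
    omegaMod k {f : ℝ → ℝ | MemL r f ∧ M r f ≤ 1} δ =
      (unif (eulerPhi (r - k)) / (unif (eulerPhi r)) ^ (1 - (k:ℝ)/(r:ℝ))) *
        δ ^ (1 - (k:ℝ)/(r:ℝ)) := by
  have hr : r ≠ 0 := hkr.ne_bot
  have hφ := unif_eulerPhi_pos hr
  obtain ⟨a, ha, rfl⟩ := exists_pos_pow_mul_eq hφ hδ hr
  calc omegaMod k (sobolevClass r) (a ^ r * unif (eulerPhi r))
    _ = a ^ (r - k) * unif (eulerPhi (r - k)) := by
      rw [omegaMod_sobolevClass_pow_mul hkr ha, omegaMod_sobolevClass_unif_eulerPhi hkr]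
    _ = _ := by
      rw [Real.mul_rpow (by positivity) hφ.le, pow_rpow_one_sub_div ha.le hkr.le hr]
      field_simp
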